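/- arXiv:1812.02676 — 4 statements merged into one kernel-verified Lean document; each statement's English description precedes it below -/
import Mathlib

section
/- Let S be a nonempty finite set of pairs, t : S → {−1, 1}, Θ a type, d_s : Θ → ℝ for s ∈ S, with auxiliary loss l_s(1; θ) = d_s(θ) and l_s(−1; θ) = 2 − d_s(θ). Let w : {−1,1} → ℝ with w(1) > 0 and w(−1) > 0, q : {−1,1} → ℝ, and Z > 0. Define the clean risk R(θ) = (1/Z) ∑_{s∈S} w(t_s)·l_s(t_s; θ) and the noisy risk R̂(θ) = (1/Z) ∑_{s∈S} [(1 − q(t_s))·w(t_s)·l_s(t_s; θ) + q(t_s)·w(−t_s)·l_s(−t_s; θ)]. Set c(τ) = 1 − q(τ) − q(τ)·w(−τ)/w(τ) for τ ∈ {−1,1} and Q = min(c(1), c(−1)). If θ* and θ satisfy ∑_{s : t_s = 1} (l_s(t_s; θ*) − l_s(t_s; θ)) ≤ 0 and ∑_{s : t_s = −1} (l_s(t_s; θ*) − l_s(t_s; θ)) ≤ 0, then R̂(θ*) − R̂(θ) ≤ Q·(R(θ*) − R(θ)). -/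
theorem noisy_risk_difference_upper_bound
    {S : Type*} [Fintype S] [Nonempty S] {Θ : Type*}
    (t : S → ℤ) (ht : ∀ s, t s = 1 ∨ t s = -1)
    (d : S → Θ → ℝ)
    (l : S → ℤ → Θ → ℝ)
    (hl1 : ∀ s θ, l s 1 θ = d s θ)
    (hlm : ∀ s θ, l s (-1) θ = 2 - d s θ)
    (w : ℤ → ℝ) (hw1 : 0 < w 1) (hwm : 0 < w (-1))
    (q : ℤ → ℝ) (Z : ℝ) (hZ : 0 < Z)
    (R Rhat : Θ → ℝ)
    (hR : ∀ θ, R θ = (1 / Z) * ∑ s : S, w (t s) * l s (t s) θ)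
    (hRhat : ∀ θ, Rhat θ = (1 / Z) * ∑ s : S,
      ((1 - q (t s)) * w (t s) * l s (t s) θ + q (t s) * w (-(t s)) * l s (-(t s)) θ))
    (c : ℤ → ℝ) (hc : ∀ τ, c τ = 1 - q τ - q τ * (w (-τ) / w τ))
    (Q : ℝ) (hQ : Q = min (c 1) (c (-1)))
    (θstar θ : Θ)
    (hpos : ∑ s ∈ Finset.univ.filter (fun s => t s = 1),
      (l s (t s) θstar - l s (t s) θ) ≤ 0)
    (hneg : ∑ s ∈ Finset.univ.filter (fun s => t s = -1),
      (l s (t s) θstar - l s (t s) θ) ≤ 0) :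
    Rhat θstar - Rhat θ ≤ Q * (R θstar - R θ) := by
  have e1 : c 1 * w 1 = (1 - q 1) * w 1 - q 1 * w (-1) := by
    rw [hc]; field_simp
  have e2 : c (-1) * w (-1) = (1 - q (-1)) * w (-1) - q (-1) * w 1 := by
    rw [hc, neg_neg]; field_simp
  rw [Finset.sum_filter] at hpos hneg
  set A := ∑ s : S, (if t s = 1 then l s (t s) θstar - l s (t s) θ else 0) with hA
  set B := ∑ s : S, (if t s = -1 then l s (t s) θstar - l s (t s) θ else 0) with hB
  have hRd : R θstar - R θ = (1 / Z) * (w 1 * A + w (-1) * B) := by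
    rw [hR, hR, ← mul_sub, ← Finset.sum_sub_distrib, hA, hB]
    congr 1
    rw [Finset.mul_sum, Finset.mul_sum, ← Finset.sum_add_distrib]
    refine Finset.sum_congr rfl fun s _ => ?_
    rcases ht s with h | h <;> simp [h] <;> ring
  have hRhd : Rhat θstar - Rhat θ
      = (1 / Z) * ((c 1 * w 1) * A + (c (-1) * w (-1)) * B) := by
    rw [hRhat, hRhat, ← mul_sub, ← Finset.sum_sub_distrib, hA, hB, e1, e2]
    congr 1
    rw [Finset.mul_sum, Finset.mul_sum, ← Finset.sum_add_distrib]
    refine Finset.sum_congr rfl fun s _ => ?_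
    rcases ht s with h | h <;> simp [h, hl1, hlm] <;> ring
  have q1 : Q ≤ c 1 := hQ ▸ min_le_left _ _
  have q2 : Q ≤ c (-1) := hQ ▸ min_le_right _ _
  have a : (c 1 - Q) * (w 1 * A) ≤ 0 :=
    mul_nonpos_of_nonneg_of_nonpos (by linarith) (mul_nonpos_of_nonneg_of_nonpos hw1.le hpos)
  have b : (c (-1) - Q) * (w (-1) * B) ≤ 0 :=
    mul_nonpos_of_nonneg_of_nonpos (by linarith) (mul_nonpos_of_nonneg_of_nonpos hwm.le hneg)
  rw [hRd, hRhd, mul_left_comm]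
  refine mul_le_mul_of_nonneg_left ?_ (by positivity)
  linarith
end

section
/- (Proposition 4.1, unhinged triplet loss is noise tolerant.) Let S be a nonempty finite set of pairs, t : S → {−1, 1}, Θ a type, and for each s ∈ S let d_s : Θ → ℝ with 0 ≤ d_s(θ) ≤ 2 for all θ; set the auxiliary loss l_s(1; θ) = d_s(θ) and l_s(−1; θ) = 2 − d_s(θ). Let K ≥ 1 and use the 1-1 sampling weights w(1) = 1 and w(−1) = 1/K. Let q(1), q(−1) ∈ [0,1] be the pair-label corruption rates and let Z > 0. Define R(θ) = (1/Z) ∑_{s∈S} w(t_s)·l_s(t_s; θ) and R̂(θ) = (1/Z) ∑_{s∈S} [(1 − q(t_s))·w(t_s)·l_s(t_s; θ) + q(t_s)·w(−t_s)·l_s(−t_s; θ)]. Suppose θ* ∈ Θ satisfies: (i) for every θ ∈ Θ, ∑_{s : t_s = 1} l_s(t_s; θ*) ≤ ∑_{s : t_s = 1} l_s(t_s; θ) and ∑_{s : t_s = −1} l_s(t_s; θ*) ≤ ∑_{s : t_s = −1} l_s(t_s; θ); and (ii) 1 − q(1) − q(1)/K ≥ 0 and 1 − q(−1) − q(−1)·K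 ≥ 0. Then θ* is a global minimizer of the noisy risk: R̂(θ*) ≤ R̂(θ) for all θ ∈ Θ. -/
/-- Proposition 4.1: unhinged triplet loss with a 1-1 sampling scheme is
noise tolerant. -/
theorem unhinged_triplet_loss_noise_tolerant
    {S : Type*} [Fintype S] [Nonempty S] {Θ : Type*}
    (t : S → ℤ) (ht : ∀ s, t s = 1 ∨ t s = -1)
    (d : S → Θ → ℝ) (hd0 : ∀ s θ, 0 ≤ d s θ) (hd2 : ∀ s θ, d s θ ≤ 2)
    (l : S → ℤ → Θ → ℝ)
    (hl1 : ∀ s θ, l s 1 θ = d s θ)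
    (hlm : ∀ s θ, l s (-1) θ = 2 - d s θ)
    (K : ℕ) (hK : 1 ≤ K)
    (w : ℤ → ℝ) (hw1 : w 1 = 1) (hwm : w (-1) = 1 / (K : ℝ))
    (q : ℤ → ℝ) (hq0 : ∀ τ, 0 ≤ q τ) (hq1 : ∀ τ, q τ ≤ 1)
    (Z : ℝ) (hZ : 0 < Z)
    (R Rhat : Θ → ℝ)
    (hR : ∀ θ, R θ = (1 / Z) * ∑ s : S, w (t s) * l s (t s) θ)
    (hRhat : ∀ θ, Rhat θ = (1 / Z) * ∑ s : S,
      ((1 - q (t s)) * w (t s) * l s (t s) θ + q (t s) * w (-(t s)) * l s (-(t s)) θ))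
    (θstar : Θ)
    (hmin : ∀ θ : Θ,
      (∑ s ∈ Finset.univ.filter (fun s => t s = 1), l s (t s) θstar
        ≤ ∑ s ∈ Finset.univ.filter (fun s => t s = 1), l s (t s) θ) ∧
      (∑ s ∈ Finset.univ.filter (fun s => t s = -1), l s (t s) θstar
        ≤ ∑ s ∈ Finset.univ.filter (fun s => t s = -1), l s (t s) θ))
    (hcond1 : 0 ≤ 1 - q 1 - q 1 / (K : ℝ))
    (hcond2 : 0 ≤ 1 - q (-1) - q (-1) * (K : ℝ)) :
    ∀ θ : Θ, Rhat θstar ≤ Rhat θ := by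
  have hKpos : (0 : ℝ) < K := by exact_mod_cast hK
  have hb : 0 ≤ (1 - q (-1) - q (-1) * (K : ℝ)) / K := div_nonneg hcond2 hKpos.le
  have key : ∀ θ, ∑ s : S,
      ((1 - q (t s)) * w (t s) * l s (t s) θ + q (t s) * w (-(t s)) * l s (-(t s)) θ)
      = ∑ s : S, 2 * q (t s) * w (-(t s))
        + (1 - q 1 - q 1 / (K : ℝ)) *
          ∑ s ∈ Finset.univ.filter (fun s => t s = 1), l s (t s) θ
        + ((1 - q (-1) - q (-1) * (K : ℝ)) / K) *
          ∑ s ∈ Finset.univ.filter (fun s => t s = -1), l s (t s) θ := by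
    intro θ
    rw [Finset.sum_filter, Finset.sum_filter, Finset.mul_sum, Finset.mul_sum,
      ← Finset.sum_add_distrib, ← Finset.sum_add_distrib]
    refine Finset.sum_congr rfl fun s _ => ?_
    rcases ht s with h | h
    · rw [h, if_pos rfl, if_neg (by norm_num), hl1, hlm, hw1, hwm]
      ring
    · rw [h, if_neg (by norm_num), if_pos rfl, neg_neg, hl1, hlm, hw1, hwm]
      field_simp
      ring
  intro θ
  rw [hRhat, hRhat, key, key]
  have h1 := mul_le_mul_of_nonneg_left (hmin θ).1 hcond1
  have h2 := mul_le_mul_of_nonneg_left (hmin θ).2 hb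
  exact mul_le_mul_of_nonneg_left (by linarith) (by positivity)
end

section
/- Fix reals p ∈ [0,1) and η ≥ 1 with p < 1 − Real.sqrt(1 − 1/η). Define, for natural numbers K ≥ 2, q₊₁(p,K) = 2p(1−p) + p²(K−2)/(K−1) and q₋₁(p,K) = 2p(1−p)/(K−1) + p²(K−2)/(K−1)². Then there exists K₀ such that for all K ≥ K₀: q₊₁(p,K)·(1 + η/K) < 1 and q₋₁(p,K)·(1 + η·K) < 1. (Hence the noise-tolerance conditions for triplet loss with semi-hard mining with skew factor η hold for all sufficiently large numbers of classes.) -/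
theorem semihard_tolerance_eventually
    (p η : ℝ) (hp0 : 0 ≤ p) (hp1 : p < 1) (hη : 1 ≤ η)
    (hbound : p < 1 - Real.sqrt (1 - 1 / η)) :
    ∃ K₀ : ℕ, ∀ K : ℕ, K₀ ≤ K →
      (2 * p * (1 - p) + p ^ 2 * ((K : ℝ) - 2) / ((K : ℝ) - 1))
          * (1 + η / (K : ℝ)) < 1 ∧
      (2 * p * (1 - p) / ((K : ℝ) - 1) + p ^ 2 * ((K : ℝ) - 2) / ((K : ℝ) - 1) ^ 2)
          * (1 + η * (K : ℝ)) < 1 := by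
  have hη0 : 0 < η := by linarith
  obtain ⟨a, ha⟩ : ∃ a, a = 2 * p * (1 - p) + p ^ 2 := ⟨_, rfl⟩
  have ha0 : 0 ≤ a := by rw [ha]; nlinarith
  have h1 : 1 - 1 / η < (1 - p) ^ 2 := by
    have h : Real.sqrt (1 - 1 / η) < 1 - p := by linarith
    exact (Real.sqrt_lt' (by linarith)).1 h
  have haη : a * η < 1 := by
    have : a < 1 / η := by rw [ha]; nlinarith
    exact (lt_div_iff₀ hη0).1 this
  have haa : a ≤ a * η := by nlinarith
  obtain ⟨N, hN⟩ := exists_nat_gt (2 / (1 - a * η))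
  refine ⟨max N 3, fun K hK => ?_⟩
  have hKN : (N : ℝ) ≤ K := by exact_mod_cast (le_max_left _ _).trans hK
  have hK3 : (3 : ℝ) ≤ K := by exact_mod_cast (le_max_right _ _).trans hK
  have hbig : 2 < K * (1 - a * η) := (div_lt_iff₀ (by linarith)).1 (hN.trans_le hKN)
  generalize (K : ℝ) = x at *
  have hx0 : 0 < x := by linarith
  have hx1 : 0 < x - 1 := by linarith
  have hq : 2 * p * (1 - p) + p ^ 2 * (x - 2) / (x - 1) ≤ a := by
    have : p ^ 2 * (x - 2) / (x - 1) ≤ p ^ 2 := by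
      rw [div_le_iff₀ hx1]; nlinarith [sq_nonneg p]
    linarith
  constructor
  · refine (mul_le_mul_of_nonneg_right hq (by positivity)).trans_lt ?_
    have e : a * (1 + η / x) = (a * x + a * η) / x := by field_simp
    rw [e, div_lt_one hx0]
    nlinarith
  · have e : 2 * p * (1 - p) / (x - 1) + p ^ 2 * (x - 2) / (x - 1) ^ 2
        = (2 * p * (1 - p) + p ^ 2 * (x - 2) / (x - 1)) / (x - 1) := by
      field_simp
    rw [e, div_mul_eq_mul_div, div_lt_one hx1]
    refine (mul_le_mul_of_nonneg_right hq (by positivity)).trans_lt ?_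
    nlinarith
end

section
/- Fix a real p ∈ [0,1). Define, for natural numbers K ≥ 2, q₊₁(p,K) = 2p(1−p) + p²(K−2)/(K−1) and q₋₁(p,K) = 2p(1−p)/(K−1) + p²(K−2)/(K−1)². Then there exists K₀ such that for all K ≥ K₀: (1 + 1/K)·q₊₁(p,K) ≤ 1 and (1 + K)·q₋₁(p,K) ≤ 1. (Hence, with the 1-1 sampling weights w(1) = 1 and w(−1) = 1/K, the noise-tolerance condition of Proposition 4.1 holds for any fixed sample noise rate p < 1 once the number of classes is large enough, i.e., unhinged triplet loss tolerates noise rates up to p < 1 − ε(K).) -/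
theorem one_one_sampling_tolerance_eventually
    (p : ℝ) (hp0 : 0 ≤ p) (hp1 : p < 1) :
    ∃ K₀ : ℕ, ∀ K : ℕ, K₀ ≤ K →
      (1 + 1 / (K : ℝ)) * (2 * p * (1 - p) + p ^ 2 * ((K : ℝ) - 2) / ((K : ℝ) - 1)) ≤ 1 ∧
      (1 + (K : ℝ)) *
        (2 * p * (1 - p) / ((K : ℝ) - 1) + p ^ 2 * ((K : ℝ) - 2) / ((K : ℝ) - 1) ^ 2) ≤ 1 := by
  have hs : 0 < (1 - p) ^ 2 := by
    have : 0 < 1 - p := by linarith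
    positivity
  obtain ⟨N, hN⟩ := exists_nat_ge (2 / (1 - p) ^ 2)
  refine ⟨max N 2, fun K hK => ?_⟩
  have hK2 : (2 : ℝ) ≤ K := by exact_mod_cast le_trans (le_max_right N 2) hK
  have hKN : (N : ℝ) ≤ K := by exact_mod_cast le_trans (le_max_left N 2) hK
  have hKs : 2 ≤ (K : ℝ) * (1 - p) ^ 2 := (div_le_iff₀ hs).1 (hN.trans hKN)
  generalize (K : ℝ) = x at *
  have hx1 : 0 < x - 1 := by linarith
  have hx : 0 < x := by linarith
  have hA : 2 * p * (1 - p) + p ^ 2 * (x - 2) / (x - 1) ≤ 1 - (1 - p) ^ 2 := by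
    have : p ^ 2 * (x - 2) / (x - 1) ≤ p ^ 2 := by
      rw [div_le_iff₀ hx1]
      nlinarith [sq_nonneg p]
    nlinarith
  constructor
  · calc _ ≤ (1 + 1 / x) * (1 - (1 - p) ^ 2) := by gcongr
      _ ≤ 1 := by
        have h : (1 + 1 / x) * (1 - (1 - p) ^ 2) = (x + 1) * (1 - (1 - p) ^ 2) / x := by
          field_simp
        rw [h, div_le_one hx]
        nlinarith
  · have h : (1 + x) * (2 * p * (1 - p) / (x - 1) + p ^ 2 * (x - 2) / (x - 1) ^ 2)
        = (1 + x) * (2 * p * (1 - p) + p ^ 2 * (x - 2) / (x - 1)) / (x - 1) := by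
      field_simp
    rw [h, div_le_one hx1]
    calc _ ≤ (1 + x) * (1 - (1 - p) ^ 2) := by gcongr
      _ ≤ x - 1 := by nlinarith
end
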